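/- arXiv:2012.02784 — 5 statements merged into one kernel-verified Lean document; each statement's English description precedes it below -/
import Mathlib

section
/- Let G and f be non-negative functions on [0, ∞) with f locally integrable, and suppose there are constants K > 0 and r > 0 such that G(t) ≤ K + ∫₀ᵗ f(s) G(s)^{r+1} ds for all t ≥ 0. Then for every t ≥ 0 satisfying K^{-r} − r ∫₀ᵗ f(s) ds > 0, one has G(t) ≤ (K^{-r} − r ∫₀ᵗ f(s) ds)^{-1/r}. -/
open MeasureTheory intervalIntegral

/-!
Let `H t` be the right-hand side of the integral inequality. It is absolutely continuous, and
`H' = f * ω ∘ G ≤ f * ω ∘ H` almost everywhere because `ω` is monotone and `G ≤ H`. If `Φ` is an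
antiderivative of `1 / ω`, then `Φ ∘ H` is again absolutely continuous and `(Φ ∘ H)' ≤ f` almost
everywhere. Integrating gives `Φ (H b) ≤ Φ (H a) + ∫ f`, and since `Φ` is strictly increasing this
bounds `H b`, hence `G b`. The power case is `ω x = x ^ (r + 1)` with `Φ x = -x ^ (-r) / r`.
-/

open Set

theorem absolutelyContinuousOnInterval_comp_of_lipschitzOnWith {X Y : Type*} [PseudoMetricSpace X]
    [PseudoMetricSpace Y] {Φ : X → Y} {u : ℝ → X} {C : NNReal} {a b : ℝ}
    (hΦ : LipschitzOnWith C Φ (u '' uIcc a b)) (hu : AbsolutelyContinuousOnInterval u a b) :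
    AbsolutelyContinuousOnInterval (Φ ∘ u) a b := by
  rw [absolutelyContinuousOnInterval_iff] at hu ⊢
  intro ε hε
  obtain ⟨δ, hδ, hsum⟩ := hu (ε / (C + 1)) (by positivity)
  refine ⟨δ, hδ, fun E hE hlen ↦ ?_⟩
  calc ∑ i ∈ Finset.range E.1, dist (Φ (u (E.2 i).1)) (Φ (u (E.2 i).2))
      ≤ ∑ i ∈ Finset.range E.1, C * dist (u (E.2 i).1) (u (E.2 i).2) :=
        Finset.sum_le_sum fun i hi ↦ hΦ.dist_le_mul _ (mem_image_of_mem u (hE.1 i hi).1) _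
          (mem_image_of_mem u (hE.1 i hi).2)
    _ = C * ∑ i ∈ Finset.range E.1, dist (u (E.2 i).1) (u (E.2 i).2) := by rw [Finset.mul_sum]
    _ ≤ (C + 1) * ∑ i ∈ Finset.range E.1, dist (u (E.2 i).1) (u (E.2 i).2) := by
        gcongr
        exact le_add_of_nonneg_right zero_le_one
    _ < (C + 1) * (ε / (C + 1)) := by
        gcongr
        exact hsum E hE hlen
    _ = ε := by field_simp

theorem absolutelyContinuousOnInterval_comp_of_contDiffOn {E : Type*} [NormedAddCommGroup E]
    [NormedSpace ℝ E] {Φ : ℝ → E} {u : ℝ → ℝ} {a b : ℝ} (hΦ : ContDiffOn ℝ 1 Φ (u '' uIcc a b))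
    (hu : AbsolutelyContinuousOnInterval u a b) :
    AbsolutelyContinuousOnInterval (Φ ∘ u) a b := by
  obtain ⟨C, hC⟩ : ∃ C, LipschitzOnWith C Φ (u '' uIcc a b) := by
    rw [hu.continuousOn.image_uIcc] at hΦ ⊢
    exact hΦ.exists_lipschitzOnWith one_ne_zero (convex_uIcc _ _) isCompact_uIcc
  exact absolutelyContinuousOnInterval_comp_of_lipschitzOnWith hC hu

theorem absolutelyContinuousOnInterval_const_add_integral {g : ℝ → ℝ} {a b : ℝ}
    (hg : IntervalIntegrable g volume a b) (K : ℝ) :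
    AbsolutelyContinuousOnInterval (fun t ↦ K + ∫ s in a..t, g s) a b :=
  (LipschitzWith.const K).lipschitzOnWith.absolutelyContinuousOnInterval.fun_add
    (hg.absolutelyContinuousOnInterval_intervalIntegral left_mem_uIcc)

theorem le_add_integral_of_ae_deriv_le {v f : ℝ → ℝ} {a b : ℝ} (hab : a ≤ b)
    (hv : AbsolutelyContinuousOnInterval v a b) (hf : IntervalIntegrable f volume a b)
    (hle : ∀ᵐ s, s ∈ Icc a b → deriv v s ≤ f s) :
    v b ≤ v a + ∫ s in a..b, f s := by
  rw [← sub_le_iff_le_add', ← hv.integral_deriv_eq_sub]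
  exact integral_mono_ae_restrict hab hv.intervalIntegrable_deriv hf
    ((ae_restrict_iff' measurableSet_Icc).2 hle)

theorem contDiffOn_one_of_hasDerivAt {𝕜 E : Type*} [NontriviallyNormedField 𝕜]
    [NormedAddCommGroup E] [NormedSpace 𝕜 E] {Φ φ : 𝕜 → E} {S : Set 𝕜} (hS : IsOpen S)
    (hΦ : ∀ x ∈ S, HasDerivAt Φ (φ x) x) (hφ : ContinuousOn φ S) :
    ContDiffOn 𝕜 1 Φ S :=
  (contDiffOn_one_iff_derivWithin hS.uniqueDiffOn).2
    ⟨fun x hx ↦ (hΦ x hx).differentiableAt.differentiableWithinAt,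
      hφ.congr fun x hx ↦ (hΦ x hx).hasDerivWithinAt.derivWithin (hS.uniqueDiffWithinAt hx)⟩

section BihariLaSalle

variable {f ω Φ : ℝ → ℝ} {a b : ℝ}

theorem comp_le_add_integral_of_ae_deriv_le_mul {u : ℝ → ℝ} {S : Set ℝ} (hab : a ≤ b)
    (hS : IsOpen S) (hω_pos : ∀ x ∈ S, 0 < ω x) (hω_cont : ContinuousOn ω S)
    (hΦ : ∀ x ∈ S, HasDerivAt Φ (ω x)⁻¹ x)
    (hu : AbsolutelyContinuousOnInterval u a b) (huS : MapsTo u (Icc a b) S)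
    (hf_int : IntervalIntegrable f volume a b)
    (hle : ∀ᵐ t, t ∈ Icc a b → deriv u t ≤ f t * ω (u t)) :
    Φ (u b) ≤ Φ (u a) + ∫ s in a..b, f s := by
  have hΦ_contDiff : ContDiffOn ℝ 1 Φ S :=
    contDiffOn_one_of_hasDerivAt hS hΦ (hω_cont.inv₀ fun x hx ↦ (hω_pos x hx).ne')
  have hΦu : AbsolutelyContinuousOnInterval (Φ ∘ u) a b := by
    refine absolutelyContinuousOnInterval_comp_of_contDiffOn (hΦ_contDiff.mono ?_) hu
    rw [uIcc_of_le hab]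
    exact huS.image_subset
  refine le_add_integral_of_ae_deriv_le hab hΦu hf_int ?_
  filter_upwards [hu.ae_differentiableAt, hle] with t hu_diff hle ht
  have hu' : HasDerivAt u (deriv u t) t := (hu_diff (Icc_subset_uIcc ht)).hasDerivAt
  rw [((hΦ _ (huS ht)).comp t hu').deriv, inv_mul_le_iff₀' (hω_pos _ (huS ht))]
  exact hle ht

theorem bihari_lasalle {G : ℝ → ℝ} {K y : ℝ} (hab : a ≤ b) (hK : 0 < K)
    (hω_mono : MonotoneOn ω (Ici 0)) (hω_zero : 0 ≤ ω 0) (hω_pos : ∀ x ∈ Ioi 0, 0 < ω x)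
    (hω_cont : ContinuousOn ω (Ioi 0)) (hΦ : ∀ x ∈ Ioi 0, HasDerivAt Φ (ω x)⁻¹ x)
    (hf : ∀ t ∈ Icc a b, 0 ≤ f t) (hG : ∀ t ∈ Icc a b, 0 ≤ G t)
    (hf_int : IntervalIntegrable f volume a b)
    (hfG_int : IntervalIntegrable (fun s ↦ f s * ω (G s)) volume a b)
    (hineq : ∀ t ∈ Icc a b, G t ≤ K + ∫ s in a..t, f s * ω (G s))
    (hy : 0 < y) (hΦy : Φ K + ∫ s in a..b, f s ≤ Φ y) :
    G b ≤ y := by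
  let H : ℝ → ℝ := fun t ↦ K + ∫ s in a..t, f s * ω (G s)
  have hω_nonneg {x : ℝ} (hx : 0 ≤ x) : 0 ≤ ω x := hω_zero.trans (hω_mono self_mem_Ici hx hx)
  have hH_pos : MapsTo H (Icc a b) (Ioi 0) := fun t ht ↦
    add_pos_of_pos_of_nonneg hK <| integral_nonneg ht.1 fun s hs ↦
      have hs' : s ∈ Icc a b := ⟨hs.1, hs.2.trans ht.2⟩
      mul_nonneg (hf s hs') (hω_nonneg (hG s hs'))
  have hH_deriv : ∀ᵐ t, t ∈ Icc a b → deriv H t ≤ f t * ω (H t) := by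
    filter_upwards [hfG_int.ae_hasDerivAt_integral] with t hderiv ht
    rw [((hderiv (Icc_subset_uIcc ht) a left_mem_uIcc).const_add K).deriv]
    have hω_le : ω (G t) ≤ ω (H t) :=
      hω_mono (hG t ht) (Ioi_subset_Ici_self (hH_pos ht)) (hineq t ht)
    exact mul_le_mul_of_nonneg_left hω_le (hf t ht)
  have hΦH : Φ (H b) ≤ Φ K + ∫ s in a..b, f s := by
    simpa [H] using comp_le_add_integral_of_ae_deriv_le_mul hab isOpen_Ioi hω_pos hω_cont hΦ
      (absolutelyContinuousOnInterval_const_add_integral hfG_int K) hH_pos hf_int hH_deriv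
  have hΦ_mono : StrictMonoOn Φ (Ioi 0) :=
    strictMonoOn_of_deriv_pos (convex_Ioi 0)
      (fun x hx ↦ (hΦ x hx).continuousAt.continuousWithinAt) fun x hx ↦ by
        rw [interior_Ioi] at hx
        simpa only [(hΦ x hx).deriv] using inv_pos.2 (hω_pos x hx)
  have hb : b ∈ Icc a b := right_mem_Icc.2 hab
  exact (hineq b hb).trans ((hΦ_mono.le_iff_le (hH_pos hb) hy).1 (hΦH.trans hΦy))

end BihariLaSalle

theorem hasDerivAt_neg_rpow_neg_div {r x : ℝ} (hr : r ≠ 0) (hx : 0 < x) :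
    HasDerivAt (fun x ↦ -x ^ (-r) / r) (x ^ (r + 1))⁻¹ x := by
  have h := (Real.hasDerivAt_rpow_const (p := -r) (Or.inl hx.ne')).fun_neg.div_const r
  rwa [neg_mul, neg_neg, mul_div_cancel_left₀ _ hr, ← neg_add', Real.rpow_neg hx.le] at h

theorem modified_gronwall_general {G f : ℝ → ℝ} {a b K r : ℝ} (hab : a ≤ b) (hK : 0 < K)
    (hr : -1 ≤ r) (hr₀ : r ≠ 0)
    (hG : ∀ t ∈ Icc a b, 0 ≤ G t) (hf : ∀ t ∈ Icc a b, 0 ≤ f t)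
    (hf_int : IntervalIntegrable f volume a b)
    (hfG_int : IntervalIntegrable (fun s ↦ f s * G s ^ (r + 1)) volume a b)
    (hineq : ∀ t ∈ Icc a b, G t ≤ K + ∫ s in a..t, f s * G s ^ (r + 1))
    (hpos : 0 < K ^ (-r) - r * ∫ s in a..b, f s) :
    G b ≤ (K ^ (-r) - r * ∫ s in a..b, f s) ^ (-(1 / r)) := by
  have hr' : 0 ≤ r + 1 := by linarith
  refine bihari_lasalle (ω := fun x ↦ x ^ (r + 1)) hab hK
    (Real.monotoneOn_rpow_Ici_of_exponent_nonneg hr') (Real.rpow_nonneg le_rfl _)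
    (fun x hx ↦ Real.rpow_pos_of_pos hx _) (Real.continuous_rpow_const hr').continuousOn
    (fun x hx ↦ hasDerivAt_neg_rpow_neg_div hr₀ hx) hf hG hf_int hfG_int hineq
    (Real.rpow_pos_of_pos hpos _) ?_
  rw [← Real.rpow_mul hpos.le, show -(1 / r) * -r = 1 by field_simp, Real.rpow_one]
  apply le_of_eq
  field_simp
  ring

/-- Modified Gronwall inequality (Lemma 3.1). -/
theorem modified_gronwall
    (G f : ℝ → ℝ) (K r : ℝ) (hK : 0 < K) (hr : 0 < r)
    (hG : ∀ t, 0 ≤ t → 0 ≤ G t)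
    (hf : ∀ t, 0 ≤ t → 0 ≤ f t)
    (hfint : ∀ t, 0 ≤ t → IntervalIntegrable f volume 0 t)
    (hGmeas : Measurable G)
    (hint : ∀ t, 0 ≤ t →
      IntervalIntegrable (fun s => f s * G s ^ (r + 1)) volume 0 t)
    (hineq : ∀ t, 0 ≤ t → G t ≤ K + ∫ s in (0:ℝ)..t, f s * G s ^ (r + 1)) :
    ∀ t, 0 ≤ t → 0 < K ^ (-r) - r * ∫ s in (0:ℝ)..t, f s →
      G t ≤ (K ^ (-r) - r * ∫ s in (0:ℝ)..t, f s) ^ (-(1 / r)) :=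
  fun t ht ↦ modified_gronwall_general ht hK (by linarith) hr.ne' (fun s hs ↦ hG s hs.1)
    (fun s hs ↦ hf s hs.1) (hfint t ht) (hint t ht) fun s hs ↦ hineq s hs.1
end

section
/- Let E : [0, ∞) → [0, ∞) be a non-increasing function and assume there is a constant ω > 0 such that ∫ₜ^∞ E(s) ds ≤ ω E(t) for all t ≥ 0. Then E(t) ≤ E(0) e^{1 − t/ω} for all t ≥ 0. -/
open MeasureTheory

/-!
Write `F t` for the tail integral of `E` over `[t, ∞)`. The hypothesis says `F ≤ ω E = -ω F'`, so
`F` decays like `exp (-t / ω)` by Grönwall's inequality; as `E` is only integrable, `F'` is replaced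
by right difference quotients. Monotonicity then turns the decay of `F` into decay of `E`, since
`h E(t) ≤ F(t - h)`. Every `h > 0` gives a bound with constant `(ω / h) exp (h / ω)`, which is
smallest, namely `e`, at `h = ω`.
-/

open Set Filter Topology

section TailIntegral

variable {f : ℝ → ℝ} {a b c k : ℝ}

theorem mul_sub_le_integral_Ici_sub_integral_Ici (hf : IntegrableOn f (Ici a)) (hab : a ≤ b)
    (hc : ∀ s ∈ Ico a b, c ≤ f s) :
    c * (b - a) ≤ (∫ s in Ici a, f s) - ∫ s in Ici b, f s := by
  rw [intervalIntegral.integral_Ici_sub_Ici hf hab, ← Real.volume_real_Ico_of_le hab]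
  exact setIntegral_ge_of_const_le_real measurableSet_Ico measure_Ico_lt_top.ne hc
    (hf.mono_set Ico_subset_Ici_self)

theorem mul_sub_le_integral_Ici_of_antitoneOn (hanti : AntitoneOn f (Icc a b))
    (hf : IntegrableOn f (Ici a)) (hab : a ≤ b) (hnonneg : ∀ s ∈ Ici b, 0 ≤ f s) :
    f b * (b - a) ≤ ∫ s in Ici a, f s := by
  have hdrop : f b * (b - a) ≤ (∫ s in Ici a, f s) - ∫ s in Ici b, f s :=
    mul_sub_le_integral_Ici_sub_integral_Ici hf hab fun s hs ↦
      hanti (Ico_subset_Icc_self hs) (right_mem_Icc.2 hab) hs.2.le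
  exact hdrop.trans (sub_le_self _ (setIntegral_nonneg measurableSet_Ici hnonneg))

theorem eventually_slope_integral_Ici_lt (hf : IntegrableOn f (Ici a))
    (hk : ∀ s ∈ Ici a, k * ∫ u in Ici s, f u ≤ f s) {r : ℝ} (hr : -k * ∫ u in Ici a, f u < r) :
    ∀ᶠ b in 𝓝[>] a, (b - a)⁻¹ * ((∫ u in Ici b, f u) - ∫ u in Ici a, f u) < r := by
  obtain ⟨q, hq, hqr⟩ := exists_between hr
  have hcont : ContinuousWithinAt (fun s ↦ -k * ∫ u in Ici s, f u) (Ici a) a :=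
    (hf.continuousOn_Ici_primitive_Ici a self_mem_Ici).const_mul (-k)
  obtain ⟨d, had, hd⟩ := mem_nhdsGE_iff_exists_Ico_subset.1 (hcont.eventually_lt_const hq)
  filter_upwards [Ioo_mem_nhdsGT had] with b ⟨hab, hbd⟩
  have hlower : ∀ s ∈ Ico a b, -q ≤ f s := fun s hs ↦ by
    have hsq : -k * ∫ u in Ici s, f u < q := hd ⟨hs.1, hs.2.trans hbd⟩
    linarith [hk s hs.1]
  have hdrop := mul_sub_le_integral_Ici_sub_integral_Ici hf hab.le hlower
  rw [inv_mul_lt_iff₀ (sub_pos.2 hab)]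
  calc (∫ u in Ici b, f u) - ∫ u in Ici a, f u ≤ (b - a) * q := by linarith
    _ < (b - a) * r := mul_lt_mul_of_pos_left hqr (sub_pos.2 hab)

theorem integral_Ici_le_mul_exp (hf : IntegrableOn f (Ici a))
    (hk : ∀ s ∈ Ici a, k * ∫ u in Ici s, f u ≤ f s) (hab : a ≤ b) :
    ∫ s in Ici b, f s ≤ (∫ s in Ici a, f s) * Real.exp (-k * (b - a)) := by
  rw [← gronwallBound_ε0]
  refine le_gronwallBound_of_liminf_deriv_right_le (f' := fun s ↦ -k * ∫ u in Ici s, f u)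
    (hf.continuousOn_Ici_primitive_Ici.mono Icc_subset_Ici_self) (fun s hs r hr ↦ ?_) le_rfl
    (fun s _ ↦ (add_zero _).ge) b (right_mem_Icc.2 hab)
  have hsub : Ici s ⊆ Ici a := Ici_subset_Ici.2 hs.1
  exact (eventually_slope_integral_Ici_lt (hf.mono_set hsub) (fun u hu ↦ hk u (hsub hu))
    hr).frequently

end TailIntegral

/-- Exponential-decay case (μ = 0) of the Haraux–Komornik–Martinez integral
inequality (Lemma 4.1). -/
theorem haraux_komornik_exponential
    (E : ℝ → ℝ) (ω : ℝ) (hω : 0 < ω)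
    (hE : ∀ t, 0 ≤ t → 0 ≤ E t)
    (hmono : AntitoneOn E (Set.Ici 0))
    (hint : ∀ t, 0 ≤ t → IntegrableOn E (Set.Ici t) volume)
    (hineq : ∀ t, 0 ≤ t → ∫ s in Set.Ici t, E s ≤ ω * E t) :
    ∀ t, 0 ≤ t → E t ≤ E 0 * Real.exp (1 - t / ω) := by
  intro t ht
  rcases le_total t ω with htω | hωt
  · calc E t ≤ E 0 := hmono self_mem_Ici ht ht
      _ ≤ E 0 * Real.exp (1 - t / ω) := le_mul_of_one_le_right (hE 0 le_rfl) <|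
        Real.one_le_exp <| sub_nonneg.2 <| (div_le_one hω).2 htω
  · have hstart : 0 ≤ t - ω := sub_nonneg.2 hωt
    have hrate : ∀ s ∈ Ici 0, ω⁻¹ * ∫ u in Ici s, E u ≤ E s := fun s hs ↦
      (inv_mul_le_iff₀ hω).2 (hineq s hs)
    refine le_of_mul_le_mul_right ?_ hω
    calc E t * ω = E t * (t - (t - ω)) := by rw [sub_sub_cancel]
      _ ≤ ∫ s in Ici (t - ω), E s :=
        mul_sub_le_integral_Ici_of_antitoneOn (hmono.mono fun s hs ↦ hstart.trans hs.1)
          (hint _ hstart) (sub_le_self t hω.le) fun s hs ↦ hE s (ht.trans hs)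
      _ ≤ (∫ s in Ici 0, E s) * Real.exp (-ω⁻¹ * (t - ω - 0)) :=
        integral_Ici_le_mul_exp (hint 0 le_rfl) hrate hstart
      _ ≤ ω * E 0 * Real.exp (-ω⁻¹ * (t - ω - 0)) := by gcongr; exact hineq 0 le_rfl
      _ = E 0 * Real.exp (1 - t / ω) * ω := by
        rw [show -ω⁻¹ * (t - ω - 0) = 1 - t / ω by field_simp; ring]
        ring
end

section
/- Let E : [0, ∞) → [0, ∞) be a non-increasing function and assume there are constants μ > 0 and ω > 0 such that ∫ₜ^∞ E(s)^{μ+1} ds ≤ ω E(0)^{μ} E(t) for all t ≥ 0. Then for every t ≥ 0, E(t) ≤ E(0) ((1 + μ) ω / (ω + μ t))^{1/μ}. -/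
open MeasureTheory

/-!
Let `F t = ∫ₜ^∞ E ^ (p + 1)` and `K = ω * E 0 ^ p`. Almost everywhere `F' = -E ^ (p + 1)`, so
`F ≤ K * E` turns into the Bernoulli inequality `F' ≤ -K ^ (-(p + 1)) * F ^ (p + 1)`, along which
`F ^ (-p)` grows at least linearly; this bounds `F s` from above. Since `E` is antitone,
`(t - s) * E t ^ (p + 1) ≤ F s` for `s ≤ t`, and the choice of `s` with `t - s = ω + p * s` gives
the claimed constant.
-/

open Set

section DifferentialInequality

variable {f : ℝ → ℝ} {a b c k p M : ℝ}

-- Lebesgue's inequality `∫ deriv f ≤ f b - f a` for monotone `f` suffices here, where equality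
-- would require absolute continuity.
lemma mul_sub_le_sub_of_ae_le_deriv (hab : a ≤ b) (hf : MonotoneOn f (Icc a b))
    (hc : ∀ᵐ x, x ∈ Ioo a b → c ≤ deriv f x) : c * (b - a) ≤ f b - f a := by
  have hf' : MonotoneOn f (uIcc a b) := by rwa [uIcc_of_le hab]
  have hfab : f a ≤ f b := hf (left_mem_Icc.2 hab) (right_mem_Icc.2 hab) hab
  have hint : ∫ x in a..b, deriv f x ≤ f b - f a := by
    have := hf'.intervalIntegral_deriv_mem_uIcc
    rw [uIcc_of_le (sub_nonneg.2 hfab)] at this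
    exact this.2
  calc c * (b - a) = ∫ _ in a..b, c := by
        rw [intervalIntegral.integral_const, smul_eq_mul, mul_comm]
    _ ≤ ∫ x in a..b, deriv f x :=
        intervalIntegral.integral_mono_ae_restrict hab intervalIntegrable_const
          hf'.intervalIntegrable_deriv
          (by rwa [← restrict_Ioo_eq_restrict_Icc, Filter.EventuallyLE,
            ae_restrict_iff' measurableSet_Ioo])
    _ ≤ f b - f a := hint

lemma rpow_neg_add_le_of_ae_deriv_le (hab : a ≤ b) (hp : 0 ≤ p) (hf : AntitoneOn f (Icc a b))
    (hfb : 0 < f b) (hderiv : ∀ᵐ x, x ∈ Ioo a b → deriv f x ≤ -(k * f x ^ (p + 1))) :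
    f a ^ (-p) + p * k * (b - a) ≤ f b ^ (-p) := by
  have hpos : ∀ x ∈ Icc a b, 0 < f x := fun x hx =>
    hfb.trans_le (hf hx (right_mem_Icc.2 hab) hx.2)
  have hmono : MonotoneOn (fun x => f x ^ (-p)) (Icc a b) := fun x hx y hy hxy =>
    Real.rpow_le_rpow_of_nonpos (hpos y hy) (hf hx hy hxy) (neg_nonpos.2 hp)
  have hslope : ∀ᵐ x, x ∈ Ioo a b → p * k ≤ deriv (fun x => f x ^ (-p)) x := by
    filter_upwards [hderiv, hf.neg.ae_differentiableWithinAt_of_mem] with x hfx hdiff hx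
    have hxI : x ∈ Icc a b := Ioo_subset_Icc_self hx
    have hd : DifferentiableAt ℝ f x :=
      differentiableAt_neg_iff.1 ((hdiff hxI).differentiableAt (Icc_mem_nhds hx.1 hx.2))
    have hcancel : f x ^ (p + 1) * f x ^ (-p - 1) = 1 := by
      rw [← Real.rpow_add (hpos x hxI), show p + 1 + (-p - 1) = 0 by ring, Real.rpow_zero]
    rw [(hd.hasDerivAt.rpow_const (Or.inl (hpos x hxI).ne')).deriv]
    calc p * k = p * f x ^ (-p - 1) * (k * f x ^ (p + 1)) := by linear_combination -p * k * hcancel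
      _ ≤ p * f x ^ (-p - 1) * -deriv f x :=
          mul_le_mul_of_nonneg_left (le_neg.1 (hfx hx))
            (mul_nonneg hp (Real.rpow_nonneg (hpos x hxI).le _))
      _ = deriv f x * -p * f x ^ (-p - 1) := by ring
  linarith [mul_sub_le_sub_of_ae_le_deriv hab hmono hslope]

lemma rpow_mul_one_add_le_of_ae_deriv_le (hab : a ≤ b) (hp : 0 < p) (hf : AntitoneOn f (Icc a b))
    (hfb : 0 ≤ f b) (hM : f a ≤ M)
    (hderiv : ∀ᵐ x, x ∈ Ioo a b → deriv f x ≤ -(k * f x ^ (p + 1))) :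
    f b ^ p * (1 + p * k * (b - a) * M ^ p) ≤ M ^ p := by
  have hfa : f b ≤ f a := hf (left_mem_Icc.2 hab) (right_mem_Icc.2 hab) hab
  have hM0 : 0 ≤ M := (hfb.trans hfa).trans hM
  rcases hfb.eq_or_lt with hfb0 | hfb
  · rw [← hfb0, Real.zero_rpow hp.ne', zero_mul]
    exact Real.rpow_nonneg hM0 p
  have hfa0 : 0 < f a := hfb.trans_le hfa
  have hMpos : 0 < M ^ p := Real.rpow_pos_of_pos (hfa0.trans_le hM) p
  have hgrowth : (M ^ p)⁻¹ + p * k * (b - a) ≤ (f b ^ p)⁻¹ := by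
    rw [← Real.rpow_neg hM0, ← Real.rpow_neg hfb.le]
    have := Real.rpow_le_rpow_of_nonpos hfa0 hM (neg_nonpos.2 hp.le)
    linarith [rpow_neg_add_le_of_ae_deriv_le hab hp.le hf hfb hderiv]
  calc f b ^ p * (1 + p * k * (b - a) * M ^ p)
      = f b ^ p * M ^ p * ((M ^ p)⁻¹ + p * k * (b - a)) := by field_simp
    _ ≤ f b ^ p * M ^ p * (f b ^ p)⁻¹ := by gcongr
    _ = M ^ p := by field_simp

end DifferentialInequality

/-- The tail `t ↦ ∫ₜ^∞ g` of the integral of `g` over half-lines, with junk value `0` at `t`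
when `g` is not integrable on `[t, ∞)`. -/
noncomputable def tailIntegral {V : Type*} [NormedAddCommGroup V] [NormedSpace ℝ V]
    (g : ℝ → V) (t : ℝ) : V :=
  ∫ s in Ici t, g s

namespace tailIntegral

section Vector

variable {V : Type*} [NormedAddCommGroup V] [NormedSpace ℝ V] {g : ℝ → V} {a b : ℝ}

lemma sub_eq_intervalIntegral (hg : IntegrableOn g (Ici a)) (hab : a ≤ b) :
    tailIntegral g a - tailIntegral g b = ∫ s in a..b, g s := by
  simp only [tailIntegral, integral_Ici_eq_integral_Ioi]
  exact intervalIntegral.integral_Ioi_sub_Ioi (hg.mono_set Ioi_subset_Ici_self) hab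

lemma ae_hasDerivAt [CompleteSpace V] (hg : IntegrableOn g (Ici a)) :
    ∀ᵐ x, x ∈ Ioo a b → HasDerivAt (tailIntegral g) (-g x) x := by
  rcases le_or_gt b a with hba | hab
  · simp [Ioo_eq_empty_of_le hba]
  have hgab : IntervalIntegrable g volume a b :=
    (intervalIntegrable_iff_integrableOn_Icc_of_le hab.le).2 (hg.mono_set Icc_subset_Ici_self)
  filter_upwards [hgab.ae_hasDerivAt_integral] with x hderiv hx
  rw [uIcc_of_le hab.le] at hderiv
  refine ((hderiv (Ioo_subset_Icc_self hx) a (left_mem_Icc.2 hab.le)).const_sub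
    (tailIntegral g a)).congr_of_eventuallyEq ?_
  filter_upwards [Ioi_mem_nhds hx.1] with y hy
  rw [← sub_eq_intervalIntegral hg hy.le, sub_sub_cancel]

end Vector

section Real

variable {g : ℝ → ℝ} {a b : ℝ}

lemma nonneg (hg : ∀ x ∈ Ici a, 0 ≤ g x) : 0 ≤ tailIntegral g a :=
  setIntegral_nonneg measurableSet_Ici hg

lemma antitoneOn (hg : IntegrableOn g (Ici a)) (hg0 : ∀ x ∈ Ici a, 0 ≤ g x) :
    AntitoneOn (tailIntegral g) (Ici a) := fun _ hx _ _ hxy =>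
  setIntegral_mono_set (hg.mono_set (Ici_subset_Ici.2 hx))
    (ae_restrict_of_forall_mem measurableSet_Ici fun s hs => hg0 s (mem_Ici.1 hx |>.trans hs))
    (Ici_subset_Ici.2 hxy).eventuallyLE

lemma sub_mul_le (hg : IntegrableOn g (Ici a)) (hanti : AntitoneOn g (Ici a))
    (hg0 : ∀ x ∈ Ici b, 0 ≤ g x) (hab : a ≤ b) : (b - a) * g b ≤ tailIntegral g a :=
  calc (b - a) * g b = ∫ _ in a..b, g b := by
        rw [intervalIntegral.integral_const, smul_eq_mul]
    _ ≤ ∫ s in a..b, g s :=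
        intervalIntegral.integral_mono_on hab intervalIntegrable_const
          ((intervalIntegrable_iff_integrableOn_Icc_of_le hab).2
            (hg.mono_set Icc_subset_Ici_self))
          fun _ hs => hanti hs.1 hab hs.2
    _ = tailIntegral g a - tailIntegral g b := (sub_eq_intervalIntegral hg hab).symm
    _ ≤ tailIntegral g a := sub_le_self _ (nonneg hg0)

end Real

end tailIntegral

section Decay

variable {E : ℝ → ℝ} {a p s t K : ℝ}

lemma tailIntegral_rpow_mul_add_le (hp : 0 < p) (hK : 0 < K) (hE : ∀ x ∈ Ici a, 0 ≤ E x)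
    (hint : IntegrableOn (fun x => E x ^ (p + 1)) (Ici a))
    (hle : ∀ x ∈ Ici a, tailIntegral (fun y => E y ^ (p + 1)) x ≤ K * E x) (has : a ≤ s) :
    tailIntegral (fun x => E x ^ (p + 1)) s ^ p * (K + p * (s - a) * E a ^ p) ≤
      K ^ (p + 1) * E a ^ p := by
  set F := tailIntegral fun x => E x ^ (p + 1)
  have hg0 : ∀ x ∈ Ici a, 0 ≤ E x ^ (p + 1) := fun x hx => Real.rpow_nonneg (hE x hx) _
  have hF0 : ∀ x ∈ Ici a, 0 ≤ F x := fun x hx =>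
    tailIntegral.nonneg fun y hy => hg0 y (Ici_subset_Ici.2 hx hy)
  have hderiv : ∀ᵐ x, x ∈ Ioo a s → deriv F x ≤ -((K ^ (p + 1))⁻¹ * F x ^ (p + 1)) := by
    filter_upwards [tailIntegral.ae_hasDerivAt (b := s) hint] with x hFx hx
    have hxa : x ∈ Ici a := hx.1.le
    rw [(hFx hx).deriv, neg_le_neg_iff, inv_mul_le_iff₀ (by positivity),
      ← Real.mul_rpow hK.le (hE x hxa)]
    exact Real.rpow_le_rpow (hF0 x hxa) (hle x hxa) (by positivity)
  have hbound := rpow_mul_one_add_le_of_ae_deriv_le has hp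
    ((tailIntegral.antitoneOn hint hg0).mono Icc_subset_Ici_self) (hF0 s has)
    (hle a self_mem_Ici) hderiv
  rw [Real.mul_rpow hK.le (hE a self_mem_Ici), Real.rpow_add_one hK.ne'] at hbound
  rw [Real.rpow_add_one hK.ne']
  calc F s ^ p * (K + p * (s - a) * E a ^ p)
      = K * (F s ^ p * (1 + p * (K ^ p * K)⁻¹ * (s - a) * (K ^ p * E a ^ p))) := by field_simp
    _ ≤ K * (K ^ p * E a ^ p) := by gcongr
    _ = K ^ p * K * E a ^ p := by ring

lemma sub_mul_rpow_mul_add_le_of_tailIntegral_le (hp : 0 < p) (hK : 0 < K)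
    (hE : ∀ x ∈ Ici a, 0 ≤ E x) (hanti : AntitoneOn E (Ici a))
    (hint : IntegrableOn (fun x => E x ^ (p + 1)) (Ici a))
    (hle : ∀ x ∈ Ici a, tailIntegral (fun y => E y ^ (p + 1)) x ≤ K * E x)
    (has : a ≤ s) (hst : s ≤ t) :
    ((t - s) * E t ^ (p + 1)) ^ p * (K + p * (s - a) * E a ^ p) ≤ K ^ (p + 1) * E a ^ p := by
  have hEt : 0 ≤ E t := hE t (has.trans hst)
  have hEa : 0 ≤ E a := hE a self_mem_Ici
  have := sub_nonneg.2 hst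
  have := sub_nonneg.2 has
  have htail : (t - s) * E t ^ (p + 1) ≤ tailIntegral (fun x => E x ^ (p + 1)) s :=
    tailIntegral.sub_mul_le (hint.mono_set (Ici_subset_Ici.2 has))
      (fun x hx y hy hxy => Real.rpow_le_rpow (hE y (Ici_subset_Ici.2 has hy))
        (hanti (Ici_subset_Ici.2 has hx) (Ici_subset_Ici.2 has hy) hxy) (by positivity))
      (fun x hx => Real.rpow_nonneg (hE x (Ici_subset_Ici.2 (has.trans hst) hx)) _) hst
  calc ((t - s) * E t ^ (p + 1)) ^ p * (K + p * (s - a) * E a ^ p)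
      ≤ tailIntegral (fun x => E x ^ (p + 1)) s ^ p * (K + p * (s - a) * E a ^ p) := by gcongr
    _ ≤ K ^ (p + 1) * E a ^ p := tailIntegral_rpow_mul_add_le hp hK hE hint hle has

lemma sub_mul_rpow_le_of_tailIntegral_le (hp : 0 < p) (hK : 0 < K)
    (hE : ∀ x ∈ Ici a, 0 ≤ E x) (hanti : AntitoneOn E (Ici a)) (hEa : 0 < E a)
    (hint : IntegrableOn (fun x => E x ^ (p + 1)) (Ici a))
    (hle : ∀ x ∈ Ici a, tailIntegral (fun y => E y ^ (p + 1)) x ≤ K * E x)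
    (has : a ≤ s) (hopt : (t - s) * E a ^ p = K + p * (s - a) * E a ^ p) :
    (t - s) * E t ^ p ≤ K := by
  have hts : 0 < t - s := by
    have := sub_nonneg.2 has
    have hgap : 0 < (t - s) * E a ^ p := by
      rw [hopt]
      positivity
    exact pos_of_mul_pos_left hgap (Real.rpow_nonneg hEa.le p)
  have hst : s < t := sub_pos.1 hts
  have hEt : 0 ≤ E t := hE t (has.trans hst.le)
  have hbound : ((t - s) * E t ^ (p + 1)) ^ p * (t - s) ≤ K ^ (p + 1) := by
    refine le_of_mul_le_mul_right ?_ (Real.rpow_pos_of_pos hEa p)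
    rw [mul_assoc, hopt]
    exact sub_mul_rpow_mul_add_le_of_tailIntegral_le hp hK hE hanti hint hle has hst.le
  refine (Real.rpow_le_rpow_iff (by positivity) hK.le (by positivity : 0 < p + 1)).1 ?_
  calc ((t - s) * E t ^ p) ^ (p + 1) = ((t - s) * E t ^ (p + 1)) ^ p * (t - s) := by
        rw [Real.mul_rpow hts.le (Real.rpow_nonneg hEt _), Real.rpow_add_one hts.ne',
          Real.mul_rpow hts.le (Real.rpow_nonneg hEt _), ← Real.rpow_mul hEt,
          ← Real.rpow_mul hEt, mul_comm p (p + 1)]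
        ring
    _ ≤ K ^ (p + 1) := hbound

lemma rpow_mul_add_le_of_tailIntegral_le (hp : 0 < p) (hK : 0 < K)
    (hE : ∀ x ∈ Ici a, 0 ≤ E x) (hanti : AntitoneOn E (Ici a))
    (hint : IntegrableOn (fun x => E x ^ (p + 1)) (Ici a))
    (hle : ∀ x ∈ Ici a, tailIntegral (fun y => E y ^ (p + 1)) x ≤ K * E x) (hat : a ≤ t) :
    E t ^ p * (K + p * (t - a) * E a ^ p) ≤ (1 + p) * K * E a ^ p := by
  have hEta : E t ≤ E a := hanti self_mem_Ici hat hat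
  rcases (hE a self_mem_Ici).eq_or_lt with hEa | hEa
  · rw [(hE t hat).antisymm' (hEta.trans_eq hEa.symm), ← hEa, Real.zero_rpow hp.ne']
    simp only [zero_mul, mul_zero, le_refl]
  have hpow : E t ^ p ≤ E a ^ p := Real.rpow_le_rpow (hE t hat) hEta hp.le
  rcases le_or_gt ((t - a) * E a ^ p) K with hshort | hlong
  · have := sub_nonneg.2 hat
    calc E t ^ p * (K + p * (t - a) * E a ^ p)
        ≤ E a ^ p * (K + p * (t - a) * E a ^ p) := by gcongr
      _ = E a ^ p * (K + p * ((t - a) * E a ^ p)) := by ring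
      _ ≤ E a ^ p * (K + p * K) := by gcongr
      _ = (1 + p) * K * E a ^ p := by ring
  -- This `s` maximises `(t - s) ^ p * (K + p * (s - a) * E a ^ p)`.
  obtain ⟨s, hopt⟩ : ∃ s, (t - s) * E a ^ p = K + p * (s - a) * E a ^ p :=
    ⟨(t + p * a - K / E a ^ p) / (1 + p), by field_simp; ring⟩
  have has : a ≤ s := by
    have hexcess : 0 < (s - a) * ((1 + p) * E a ^ p) := by linarith
    exact (sub_pos.1 (pos_of_mul_pos_left hexcess (by positivity))).le
  calc E t ^ p * (K + p * (t - a) * E a ^ p)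
      = (1 + p) * ((t - s) * E t ^ p) * E a ^ p := by linear_combination -E t ^ p * hopt
    _ ≤ (1 + p) * K * E a ^ p := by
        gcongr
        exact sub_mul_rpow_le_of_tailIntegral_le hp hK hE hanti hEa hint hle has hopt

end Decay

/-- Polynomial-decay case (μ > 0) of the Haraux–Komornik–Martinez integral
inequality (Lemma 4.1). -/
theorem haraux_komornik_polynomial
    (E : ℝ → ℝ) (μ ω : ℝ) (hμ : 0 < μ) (hω : 0 < ω)
    (hE : ∀ t, 0 ≤ t → 0 ≤ E t)
    (hmono : AntitoneOn E (Set.Ici 0))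
    (hint : ∀ t, 0 ≤ t →
      IntegrableOn (fun s => E s ^ (μ + 1)) (Set.Ici t) volume)
    (hineq : ∀ t, 0 ≤ t →
      ∫ s in Set.Ici t, E s ^ (μ + 1) ≤ ω * E 0 ^ μ * E t) :
    ∀ t, 0 ≤ t →
      E t ≤ E 0 * ((1 + μ) * ω / (ω + μ * t)) ^ (1 / μ) := by
  intro t ht
  have hEt : 0 ≤ E t := hE t ht
  have hEt0 : E t ≤ E 0 := hmono self_mem_Ici ht ht
  rcases (hE 0 le_rfl).eq_or_lt with h0 | h0
  · rwa [← h0, zero_mul, h0]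
  have he : 0 < E 0 ^ μ := Real.rpow_pos_of_pos h0 μ
  have hdecay : E t ^ μ * (ω * E 0 ^ μ + μ * (t - 0) * E 0 ^ μ) ≤
      (1 + μ) * (ω * E 0 ^ μ) * E 0 ^ μ :=
    rpow_mul_add_le_of_tailIntegral_le hμ (mul_pos hω he) hE hmono (hint 0 le_rfl) hineq ht
  have hpow : E t ^ μ ≤ E 0 ^ μ * ((1 + μ) * ω / (ω + μ * t)) := by
    rw [← mul_div_assoc, le_div_iff₀ (by positivity)]
    exact le_of_mul_le_mul_right (by linarith) he
  calc E t ≤ (E 0 ^ μ * ((1 + μ) * ω / (ω + μ * t))) ^ μ⁻¹ :=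
        (Real.le_rpow_inv_iff_of_pos hEt (by positivity) hμ).2 hpow
    _ = E 0 * ((1 + μ) * ω / (ω + μ * t)) ^ (1 / μ) := by
        rw [Real.mul_rpow he.le (by positivity), Real.rpow_rpow_inv h0.le hμ.ne', one_div]
end

section
/- Consider the Galerkin system: let n ∈ ℕ, let λ₁, …, λₙ be positive reals, let m₀, m₁ > 0, and let α, β be nonzero reals. Let h = (h₁, …, hₙ) : [0, ∞) → ℝⁿ be twice differentiable and c = (c₁, …, cₙ) : [0, ∞) → ℝⁿ be differentiable, satisfying for each k and all t ≥ 0: hₖ''(t) + (m₀ + m₁ Σⱼ λⱼ hⱼ(t)²) λₖ hₖ(t) = α λₖ cₖ(t) and cₖ'(t) + λₖ cₖ(t) + β λₖ hₖ'(t) = 0. Define the energy Eⁿ(t) = (1/2) Σₖ hₖ'(t)² + (m₀/2) Σₖ λₖ hₖ(t)² + (m₁/4) (Σₖ λₖ hₖ(t)²)² + (α/(2β)) Σₖ cₖ(t)². Then for all t ≥ 0, (Eⁿ)'(t) = −(α/β) Σₖ λₖ cₖ(t)²; in particular, if α and β have the same sign then Eⁿ is non-increasing. -/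
open Finset

/-! Testing the wave equation with the velocity `v` and the heat equation with the temperature `c`
shows that the mechanical energy gains power `α ∑ λₖ cₖ vₖ` from the coupling, while the thermal
energy loses `β ∑ λₖ cₖ vₖ` to it and `∑ λₖ cₖ²` to diffusion. Weighting the thermal energy by
`α / β` cancels the two coupling terms, so only the diffusion term survives. The power of the
elastic force is an exact derivative for every Kirchhoff stiffness `M` that has a primitive `P`;
the classical law `M s = m₀ + m₁ s` is the case `P s = m₀ s + m₁ s² / 2`. -/

section KirchhoffHeat

variable {ι : Type*} [Fintype ι]

/-- The squared gradient norm `∫ |∇u(t)|²` of `u(t) = ∑ qₖ(t) eₖ`, where the `eₖ` are orthonormal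
Dirichlet eigenfunctions with eigenvalues `lam k`. -/
def gradNormSq (lam : ι → ℝ) (q : ι → ℝ → ℝ) (t : ℝ) : ℝ :=
  ∑ k, lam k * q k t ^ 2

/-- The Galerkin system for the Kirchhoff–heat equations with stiffness `M`, at time `t`, for the
modal displacements `h`, velocities `v` and temperatures `c`. It is written in first-order form
and solved for the derivatives. -/
structure IsKirchhoffHeatSolutionAt (lam : ι → ℝ) (M : ℝ → ℝ) (α β : ℝ)
    (h v c : ι → ℝ → ℝ) (t : ℝ) : Prop where
  displacement : ∀ k, HasDerivAt (h k) (v k t) t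
  velocity : ∀ k,
    HasDerivAt (v k) (α * lam k * c k t - M (gradNormSq lam h t) * lam k * h k t) t
  temperature : ∀ k, HasDerivAt (c k) (-(lam k * c k t) - β * lam k * v k t) t

/-- The kinetic plus elastic energy, where the elastic potential is half of a primitive `P` of the
Kirchhoff stiffness, evaluated at the squared gradient norm. -/
noncomputable def mechanicalEnergy (lam : ι → ℝ) (P : ℝ → ℝ) (h v : ι → ℝ → ℝ) (t : ℝ) : ℝ :=
  (1 / 2) * ∑ k, v k t ^ 2 + (1 / 2) * P (gradNormSq lam h t)

/-- The thermal energy `(1/2) ∫ |θ(t)|²` of `θ(t) = ∑ cₖ(t) eₖ`. -/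
noncomputable def thermalEnergy (c : ι → ℝ → ℝ) (t : ℝ) : ℝ :=
  (1 / 2) * ∑ k, c k t ^ 2

/-- The total energy of the Kirchhoff–heat system, with the weight `α / β` on the thermal energy
for which the coupling terms cancel. -/
noncomputable def kirchhoffHeatEnergy (lam : ι → ℝ) (P : ℝ → ℝ) (α β : ℝ)
    (h v c : ι → ℝ → ℝ) (t : ℝ) : ℝ :=
  mechanicalEnergy lam P h v t + α / β * thermalEnergy c t

theorem gradNormSq_nonneg {lam : ι → ℝ} (hlam : ∀ k, 0 ≤ lam k) (q : ι → ℝ → ℝ) (t : ℝ) :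
    0 ≤ gradNormSq lam q t :=
  sum_nonneg fun k _ => mul_nonneg (hlam k) (sq_nonneg _)

theorem hasDerivAt_gradNormSq (lam : ι → ℝ) {q : ι → ℝ → ℝ} {q' : ι → ℝ} {t : ℝ}
    (hq : ∀ k, HasDerivAt (q k) (q' k) t) :
    HasDerivAt (gradNormSq lam q) (2 * ∑ k, lam k * q k t * q' k) t := by
  have hterm (k : ι) :
      HasDerivAt (fun s => lam k * q k s ^ 2) (2 * (lam k * q k t * q' k)) t :=
    (((hq k).fun_pow 2).const_mul (lam k)).congr_deriv (by ring)
  rw [mul_sum]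
  exact HasDerivAt.fun_sum fun k _ => hterm k

theorem hasDerivAt_half_sum_sq {q : ι → ℝ → ℝ} {q' : ι → ℝ} {t : ℝ}
    (hq : ∀ k, HasDerivAt (q k) (q' k) t) :
    HasDerivAt (fun s => (1 / 2) * ∑ k, q k s ^ 2) (∑ k, q k t * q' k) t := by
  simpa [gradNormSq] using (hasDerivAt_gradNormSq 1 hq).const_mul (1 / 2 : ℝ)

variable {lam : ι → ℝ} {M P : ℝ → ℝ} {α β : ℝ} {h v c : ι → ℝ → ℝ} {t : ℝ}

namespace IsKirchhoffHeatSolutionAt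

theorem of_deriv (hh : ∀ k, DifferentiableAt ℝ (h k) t)
    (hh' : ∀ k, DifferentiableAt ℝ (deriv (h k)) t) (hc : ∀ k, DifferentiableAt ℝ (c k) t)
    (wave_eq : ∀ k,
      deriv (deriv (h k)) t + M (gradNormSq lam h t) * lam k * h k t = α * lam k * c k t)
    (heat_eq : ∀ k, deriv (c k) t + lam k * c k t + β * lam k * deriv (h k) t = 0) :
    IsKirchhoffHeatSolutionAt lam M α β h (fun k => deriv (h k)) c t where
  displacement k := (hh k).hasDerivAt
  velocity k := (hh' k).hasDerivAt.congr_deriv (eq_sub_of_add_eq (wave_eq k))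
  temperature k := (hc k).hasDerivAt.congr_deriv (by linear_combination heat_eq k)

theorem hasDerivAt_mechanicalEnergy (sol : IsKirchhoffHeatSolutionAt lam M α β h v c t)
    (hP : HasDerivAt P (M (gradNormSq lam h t)) (gradNormSq lam h t)) :
    HasDerivAt (mechanicalEnergy lam P h v) (α * ∑ k, lam k * c k t * v k t) t := by
  have kinetic := hasDerivAt_half_sum_sq sol.velocity
  have elastic :=
    (hP.comp t (hasDerivAt_gradNormSq lam sol.displacement)).const_mul (1 / 2)
  refine (kinetic.add elastic).congr_deriv ?_
  calc
    _ = ∑ k, v k t * (α * lam k * c k t - M (gradNormSq lam h t) * lam k * h k t)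
          + ∑ k, M (gradNormSq lam h t) * (lam k * h k t * v k t) := by
      rw [← mul_sum]; ring
    _ = α * ∑ k, lam k * c k t * v k t := by
      rw [← sum_add_distrib, mul_sum]
      exact sum_congr rfl fun k _ => by ring

theorem hasDerivAt_thermalEnergy (sol : IsKirchhoffHeatSolutionAt lam M α β h v c t) :
    HasDerivAt (thermalEnergy c)
      (-gradNormSq lam c t - β * ∑ k, lam k * c k t * v k t) t := by
  refine (hasDerivAt_half_sum_sq sol.temperature).congr_deriv ?_
  rw [gradNormSq, mul_sum, ← sum_neg_distrib, ← sum_sub_distrib]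
  exact sum_congr rfl fun k _ => by ring

theorem hasDerivAt_kirchhoffHeatEnergy (sol : IsKirchhoffHeatSolutionAt lam M α β h v c t)
    (hβ : β ≠ 0) (hP : HasDerivAt P (M (gradNormSq lam h t)) (gradNormSq lam h t)) :
    HasDerivAt (kirchhoffHeatEnergy lam P α β h v c) (-(α / β) * gradNormSq lam c t) t := by
  refine ((sol.hasDerivAt_mechanicalEnergy hP).add
    (sol.hasDerivAt_thermalEnergy.const_mul (α / β))).congr_deriv ?_
  field_simp
  ring

end IsKirchhoffHeatSolutionAt

theorem galerkin_energy_identity_general {T : Set ℝ} (hT : Convex ℝ T) (hβ : β ≠ 0)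
    (hP : ∀ s, HasDerivAt P (M s) s)
    (sol : ∀ t ∈ T, IsKirchhoffHeatSolutionAt lam M α β h v c t) :
    (∀ t ∈ T, HasDerivAt (kirchhoffHeatEnergy lam P α β h v c)
        (-(α / β) * gradNormSq lam c t) t)
      ∧ ((∀ k, 0 ≤ lam k) → 0 ≤ α / β →
        AntitoneOn (kirchhoffHeatEnergy lam P α β h v c) T) := by
  have identity : ∀ t ∈ T, HasDerivAt (kirchhoffHeatEnergy lam P α β h v c)
      (-(α / β) * gradNormSq lam c t) t :=
    fun t ht => (sol t ht).hasDerivAt_kirchhoffHeatEnergy hβ (hP _)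
  refine ⟨identity, fun hlam hαβ => antitoneOn_of_hasDerivWithinAt_nonpos hT
    (fun t ht => (identity t ht).continuousAt.continuousWithinAt)
    (fun t ht => (identity t (interior_subset ht)).hasDerivWithinAt) fun t _ => ?_⟩
  exact mul_nonpos_of_nonpos_of_nonneg (neg_nonpos.mpr hαβ) (gradNormSq_nonneg hlam c t)

theorem hasDerivAt_primitive_affine (m₀ m₁ s : ℝ) :
    HasDerivAt (fun s => m₀ * s + m₁ / 2 * s ^ 2) (m₀ + m₁ * s) s :=
  (((hasDerivAt_id' s).const_mul m₀).add (((hasDerivAt_id' s).fun_pow 2).const_mul (m₁ / 2)))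
    |>.congr_deriv (by ring)

theorem kirchhoffHeatEnergy_affine (lam : ι → ℝ) (m₀ m₁ α β : ℝ) (h v c : ι → ℝ → ℝ) (t : ℝ) :
    kirchhoffHeatEnergy lam (fun s => m₀ * s + m₁ / 2 * s ^ 2) α β h v c t =
      (1 / 2) * ∑ k, v k t ^ 2
        + (m₀ / 2) * ∑ k, lam k * h k t ^ 2
        + (m₁ / 4) * (∑ k, lam k * h k t ^ 2) ^ 2
        + (α / (2 * β)) * ∑ k, c k t ^ 2 := by
  rw [kirchhoffHeatEnergy, mechanicalEnergy, thermalEnergy, gradNormSq]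
  ring

end KirchhoffHeat

/-- Energy identity for the Faedo–Galerkin approximation of the coupled
non-degenerate Kirchhoff–heat system (finite-dimensional form of Lemma 2.1). -/
theorem galerkin_energy_identity
    (n : ℕ) (lam : Fin n → ℝ) (hlam : ∀ k, 0 < lam k)
    (m₀ m₁ α β : ℝ) (hm₀ : 0 < m₀) (hm₁ : 0 < m₁) (hα : α ≠ 0) (hβ : β ≠ 0)
    (h c : Fin n → ℝ → ℝ)
    (hdiff : ∀ k, Differentiable ℝ (h k))
    (hdiff' : ∀ k, Differentiable ℝ (deriv (h k)))
    (cdiff : ∀ k, Differentiable ℝ (c k))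
    (heq : ∀ k, ∀ t, 0 ≤ t →
      deriv (deriv (h k)) t
        + (m₀ + m₁ * ∑ j, lam j * (h j t) ^ 2) * lam k * h k t
        = α * lam k * c k t)
    (ceq : ∀ k, ∀ t, 0 ≤ t →
      deriv (c k) t + lam k * c k t + β * lam k * deriv (h k) t = 0)
    (E : ℝ → ℝ)
    (hE : E = fun t =>
      (1 / 2) * ∑ k, (deriv (h k) t) ^ 2
        + (m₀ / 2) * ∑ k, lam k * (h k t) ^ 2
        + (m₁ / 4) * (∑ k, lam k * (h k t) ^ 2) ^ 2
        + (α / (2 * β)) * ∑ k, (c k t) ^ 2) :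
    (∀ t, 0 ≤ t →
        HasDerivAt E (-(α / β) * ∑ k, lam k * (c k t) ^ 2) t)
      ∧ (0 < α / β → AntitoneOn E (Set.Ici 0)) := by
  obtain rfl := hE.trans (funext fun t =>
    (kirchhoffHeatEnergy_affine lam m₀ m₁ α β h (fun k => deriv (h k)) c t).symm)
  have energy := galerkin_energy_identity_general (convex_Ici 0) hβ
    (hasDerivAt_primitive_affine m₀ m₁) fun t ht =>
      .of_deriv (hdiff · t) (hdiff' · t) (cdiff · t) (heq · t ht) (ceq · t ht)
  exact ⟨energy.1, fun hαβ => energy.2 (fun k => (hlam k).le) hαβ.le⟩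
end

section
/- Consider the Galerkin system: let n ∈ ℕ, let λ₁, …, λₙ be positive reals, let m₀, m₁ > 0, and let α, β be nonzero reals. Let h : [0, ∞) → ℝⁿ be twice differentiable and c : [0, ∞) → ℝⁿ be differentiable, satisfying for each k and all t ≥ 0: hₖ''(t) + (m₀ + m₁ Σⱼ λⱼ hⱼ(t)²) λₖ hₖ(t) = α λₖ cₖ(t) and cₖ'(t) + λₖ cₖ(t) + β λₖ hₖ'(t) = 0. Define the higher-order energy E*ⁿ(t) = Σₖ λₖ hₖ'(t)² + (m₀ + m₁ Σₖ λₖ hₖ(t)²) Σₖ λₖ² hₖ(t)² + (α/β) Σₖ λₖ cₖ(t)². Then for all t ≥ 0: (E*ⁿ)'(t) + (2α/β) Σₖ λₖ² cₖ(t)² = 2 m₁ (Σₖ λₖ hₖ(t) hₖ'(t)) (Σₖ λₖ² hₖ(t)²). -/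
open Finset

/-!
Test the wave equation with `w k * h' k` and the heat equation with `w k * c k`. The stiffness
term differentiates exactly, up to the variation of the stiffness itself, and the two coupling
terms are `α` and `-β` times the same sum `∑ w k λ k c k h' k`, so they cancel once the heat
balance is weighted by `α / β`. The weights `w = λ` correspond to testing with `-Δ eₖ`.
-/

section WeightedEnergies

variable {𝕜 ι : Type*} [NontriviallyNormedField 𝕜] [Fintype ι] {t : 𝕜}

theorem hasDerivAt_sum_mul_sq (w : ι → 𝕜) {f : ι → 𝕜 → 𝕜} {f' : ι → 𝕜}
    (hf : ∀ k, HasDerivAt (f k) (f' k) t) :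
    HasDerivAt (fun s => ∑ k, w k * f k s ^ 2) (2 * ∑ k, w k * f k t * f' k) t := by
  rw [mul_sum]
  refine HasDerivAt.fun_sum fun k _ => (((hf k).fun_pow 2).const_mul (w k)).congr_deriv ?_
  push_cast
  ring

theorem hasDerivAt_wave_energy (w lam : ι → 𝕜) {u v : ι → 𝕜 → 𝕜} {v' F : ι → 𝕜}
    {m : 𝕜 → 𝕜} {m' : 𝕜}
    (hu : ∀ k, HasDerivAt (u k) (v k t) t) (hv : ∀ k, HasDerivAt (v k) (v' k) t)
    (hm : HasDerivAt m m' t) (wave : ∀ k, v' k + m t * lam k * u k t = F k) :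
    HasDerivAt
      (fun s => (∑ k, w k * v k s ^ 2) + m s * ∑ k, w k * lam k * u k s ^ 2)
      (m' * (∑ k, w k * lam k * u k t ^ 2) + 2 * ∑ k, w k * v k t * F k) t := by
  have kinetic := hasDerivAt_sum_mul_sq w hv
  have elastic := hm.fun_mul (hasDerivAt_sum_mul_sq (fun k => w k * lam k) hu)
  have tested : ∑ k, w k * v k t * F k =
      (∑ k, w k * v k t * v' k) + m t * ∑ k, w k * lam k * u k t * v k t := by
    rw [mul_sum, ← sum_add_distrib]
    refine sum_congr rfl fun k _ => ?_
    rw [← wave k]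
    ring
  refine (kinetic.fun_add elastic).congr_deriv ?_
  rw [tested]
  ring

theorem hasDerivAt_heat_energy (w lam : ι → 𝕜) {θ : ι → 𝕜 → 𝕜} {θ' G : ι → 𝕜}
    (hθ : ∀ k, HasDerivAt (θ k) (θ' k) t) (heat : ∀ k, θ' k + lam k * θ k t = G k) :
    HasDerivAt (fun s => ∑ k, w k * θ k s ^ 2)
      (2 * (∑ k, w k * θ k t * G k) - 2 * ∑ k, w k * lam k * θ k t ^ 2) t := by
  refine (hasDerivAt_sum_mul_sq w hθ).congr_deriv ?_
  rw [← mul_sub, ← sum_sub_distrib]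
  congr 1
  refine sum_congr rfl fun k _ => ?_
  rw [← heat k]
  ring

theorem galerkin_higher_order_identity_general (w lam : ι → 𝕜) {M : 𝕜 → 𝕜} {M' α β : 𝕜}
    (hβ : β ≠ 0) {h h' c : ι → 𝕜 → 𝕜} {h'' c' : ι → 𝕜}
    (hh : ∀ k, HasDerivAt (h k) (h' k t) t) (hh' : ∀ k, HasDerivAt (h' k) (h'' k) t)
    (hc : ∀ k, HasDerivAt (c k) (c' k) t)
    (hM : HasDerivAt M M' (∑ j, lam j * h j t ^ 2))
    (wave : ∀ k, h'' k + M (∑ j, lam j * h j t ^ 2) * lam k * h k t = α * lam k * c k t)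
    (heat : ∀ k, c' k + lam k * c k t + β * lam k * h' k t = 0) :
    HasDerivAt
      (fun s => (∑ k, w k * h' k s ^ 2)
        + M (∑ k, lam k * h k s ^ 2) * (∑ k, w k * lam k * h k s ^ 2)
        + (α / β) * ∑ k, w k * c k s ^ 2)
      (2 * M' * (∑ k, lam k * h k t * h' k t) * (∑ k, w k * lam k * h k t ^ 2)
        - (2 * α / β) * ∑ k, w k * lam k * c k t ^ 2) t := by
  have stiffness := hM.comp t (hasDerivAt_sum_mul_sq lam hh)
  have mechanical := hasDerivAt_wave_energy w lam hh hh' stiffness wave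
  have thermal := hasDerivAt_heat_energy w lam hc fun k => eq_neg_of_add_eq_zero_left (heat k)
  have coupling_cancels : (∑ k, w k * h' k t * (α * lam k * c k t))
      + (α / β) * ∑ k, w k * c k t * -(β * lam k * h' k t) = 0 := by
    rw [mul_sum, ← sum_add_distrib]
    refine sum_eq_zero fun k _ => ?_
    field_simp
    ring
  refine (mechanical.fun_add (thermal.const_mul (α / β))).congr_deriv ?_
  linear_combination 2 * coupling_cancels

end WeightedEnergies

/-- Higher-order energy identity (Step 3 of the well-posedness proof) for the
Galerkin approximations of the coupled non-degenerate Kirchhoff–heat system. -/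
theorem galerkin_higher_order_identity
    (n : ℕ) (lam : Fin n → ℝ) (hlam : ∀ k, 0 < lam k)
    (m₀ m₁ α β : ℝ) (hm₀ : 0 < m₀) (hm₁ : 0 < m₁) (hα : α ≠ 0) (hβ : β ≠ 0)
    (h c : Fin n → ℝ → ℝ)
    (hdiff : ∀ k, Differentiable ℝ (h k))
    (hdiff' : ∀ k, Differentiable ℝ (deriv (h k)))
    (cdiff : ∀ k, Differentiable ℝ (c k))
    (heq : ∀ k, ∀ t, 0 ≤ t →
      deriv (deriv (h k)) t
        + (m₀ + m₁ * ∑ j, lam j * (h j t) ^ 2) * lam k * h k t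
        = α * lam k * c k t)
    (ceq : ∀ k, ∀ t, 0 ≤ t →
      deriv (c k) t + lam k * c k t + β * lam k * deriv (h k) t = 0)
    (Estar : ℝ → ℝ)
    (hEstar : Estar = fun t =>
      (∑ k, lam k * (deriv (h k) t) ^ 2)
        + (m₀ + m₁ * ∑ k, lam k * (h k t) ^ 2) * ∑ k, (lam k) ^ 2 * (h k t) ^ 2
        + (α / β) * ∑ k, lam k * (c k t) ^ 2) :
    ∀ t, 0 ≤ t →
      HasDerivAt Estar
        (2 * m₁ * (∑ k, lam k * h k t * deriv (h k) t)
            * (∑ k, (lam k) ^ 2 * (h k t) ^ 2)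
          - (2 * α / β) * ∑ k, (lam k) ^ 2 * (c k t) ^ 2) t := by
  intro t ht
  simpa only [hEstar, ← sq] using galerkin_higher_order_identity_general lam lam hβ
    (fun k => (hdiff k t).hasDerivAt) (fun k => (hdiff' k t).hasDerivAt)
    (fun k => (cdiff k t).hasDerivAt) ((hasDerivAt_const_mul m₁).const_add m₀)
    (fun k => heq k t ht) (fun k => ceq k t ht)
end
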